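/- For positive semidefinite matrices A, B and any real r with 0 ≤ r ≤ 1, and every index j, λ_j(A^{r+1} + B^{r+1}) ≥ (1/2) λ_j((A+B)(A^r + B^r)). -/

import Mathlib

open scoped ComplexOrder Matrix

/-- `eigDesc M j` : the `j`-th largest (0-indexed) real part of the eigenvalues
(roots of the characteristic polynomial, with multiplicity) of `M`. -/
noncomputable def eigDesc {m : Type*} [Fintype m] [DecidableEq m]
    (M : Matrix m m ℂ) (j : ℕ) : ℝ :=
  ((M.charpoly.roots.map Complex.re).sort (· ≥ ·)).getD j 0

/-- `svalDesc K j` : the `j`-th largest (0-indexed) singular value of `K`. -/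
noncomputable def svalDesc {m n : Type*} [Fintype m] [Fintype n] [DecidableEq n]
    (K : Matrix m n ℂ) (j : ℕ) : ℝ :=
  Real.sqrt (eigDesc (Kᴴ * K) j)

/-- Real power of a Hermitian matrix, via the functional calculus. -/
noncomputable def Matrix.IsHermitian.rpow {n : Type*} [Fintype n] [DecidableEq n]
    {A : Matrix n n ℂ} (hA : A.IsHermitian) (r : ℝ) : Matrix n n ℂ :=
  hA.cfc (fun x => x ^ r)

/-! Put `C = (A + B) / 2` and `S = (A + B) ^ (1 / 2)`. For `0 ≤ r ≤ 1` the function `t ^ r` is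
operator concave and `t ^ (r + 1)` is operator convex, so
`S * ((A ^ r + B ^ r) / 2) * S ≤ S * C ^ r * S = 2 * C ^ (r + 1) ≤ A ^ (r + 1) + B ^ (r + 1)`
in the Loewner order. The product `S * X * S` has the same characteristic polynomial as
`(A + B) * X`, and ordered eigenvalues of Hermitian matrices are monotone in the Loewner order. -/

open Set MeasureTheory RCLike

section Midpoint

variable {E β : Type*} [AddCommGroup E] [Module ℝ E]
  [AddCommGroup β] [PartialOrder β] [Module ℝ β] {s : Set E} {f : E → β} {x y : E}

theorem map_midpoint_le_midpoint_of_convexOn (hf : ConvexOn ℝ s f) (hx : x ∈ s) (hy : y ∈ s) :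
    f (midpoint ℝ x y) ≤ midpoint ℝ (f x) (f y) := by
  have half_nonneg : (0 : ℝ) ≤ ⅟2 := by norm_num
  simpa only [midpoint_eq_smul_add, smul_add] using
    hf.2 hx hy half_nonneg half_nonneg (invOf_two_add_invOf_two (R := ℝ))

theorem midpoint_le_map_midpoint_of_concaveOn (hf : ConcaveOn ℝ s f) (hx : x ∈ s) (hy : y ∈ s) :
    midpoint ℝ (f x) (f y) ≤ f (midpoint ℝ x y) :=
  map_midpoint_le_midpoint_of_convexOn (β := βᵒᵈ) hf hx hy

end Midpoint

section OperatorConvexity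

theorem convexOn_star_mul_self {A : Type*} [Ring A] [StarRing A] [PartialOrder A]
    [StarOrderedRing A] [Algebra ℝ A] [StarModule ℝ A] [PosSMulMono ℝ A] :
    ConvexOn ℝ univ (fun a : A ↦ star a * a) := by
  refine ⟨convex_univ, fun a _ b _ s t hs ht hst ↦ ?_⟩
  have defect : s • (star a * a) + t • (star b * b) - star (s • a + t • b) * (s • a + t • b)
      = (s * t) • (star (a - b) * (a - b)) := by
    obtain rfl : t = 1 - s := by linarith
    simp only [star_add, star_sub, star_smul, star_trivial, mul_add, add_mul, mul_sub, sub_mul,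
      smul_mul_assoc, mul_smul_comm]
    module
  rw [← sub_nonneg, defect]
  exact smul_nonneg (mul_nonneg hs ht) (star_mul_self_nonneg _)

theorem rpowIntegrand₁₂_eq_affine_add_inv {p t x : ℝ} (ht : 0 < t) (hx : 0 ≤ x) :
    Real.rpowIntegrand₁₂ p t x
      = t ^ (p - 2) * x - t ^ (p - 1) + t ^ p * (t + x)⁻¹ := by
  have rpow_sub_one : t ^ (p - 1) = t ^ (p - 2) * t := by
    rw [← Real.rpow_add_one ht.ne']; ring_nf
  have rpow_self : t ^ p = t ^ (p - 2) * t * t := by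
    rw [← Real.rpow_add_one ht.ne', ← Real.rpow_add_one ht.ne']; ring_nf
  have : t + x ≠ 0 := by positivity
  simp only [Real.rpowIntegrand₁₂, rpow_sub_one, rpow_self]
  field_simp
  ring

variable {A : Type*} [CStarAlgebra A] [PartialOrder A] [StarOrderedRing A]

theorem cfc_rpowIntegrand₁₂_eq {p t : ℝ} (ht : 0 < t) {a : A} (ha : 0 ≤ a) :
    cfc (Real.rpowIntegrand₁₂ p t) a
      = t ^ (p - 2) • a - algebraMap ℝ A (t ^ (p - 1))
        + t ^ p • Ring.inverse (algebraMap ℝ A t + a) := by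
  have spectrum_ne : ∀ z ∈ spectrum ℝ a, t + z ≠ 0 := by grind
  have continuousOn_inv : ContinuousOn (fun z : ℝ ↦ (t + z)⁻¹) (spectrum ℝ a) :=
    (by fun_prop : ContinuousOn (fun z : ℝ ↦ t + z) (spectrum ℝ a)).inv₀ spectrum_ne
  calc
    cfc (Real.rpowIntegrand₁₂ p t) a
        = cfc (fun z ↦ t ^ (p - 2) * z - t ^ (p - 1) + t ^ p * (t + z)⁻¹) a :=
      cfc_congr fun z hz ↦
        rpowIntegrand₁₂_eq_affine_add_inv ht (spectrum_nonneg_of_nonneg ha hz)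
    _ = cfc (fun z ↦ t ^ (p - 2) * z - t ^ (p - 1)) a + cfc (fun z ↦ t ^ p * (t + z)⁻¹) a :=
      cfc_add _ _ _ (by fun_prop) (continuousOn_inv.const_mul _)
    _ = _ := by
      rw [cfc_sub (fun z ↦ t ^ (p - 2) * z) (fun _ ↦ t ^ (p - 1)) a, cfc_const _ a,
        cfc_const_mul _ (fun z ↦ z) a, cfc_const_mul _ (fun z ↦ (t + z)⁻¹) a continuousOn_inv,
        cfc_inv (fun z ↦ t + z) a spectrum_ne, cfc_const_add t (fun z ↦ z) a, cfc_id' ℝ a]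

theorem convexOn_cfc_rpowIntegrand₁₂ {p t : ℝ} (ht : 0 < t) :
    ConvexOn ℝ (Ici (0 : A)) (cfc (Real.rpowIntegrand₁₂ p t)) := by
  refine ConvexOn.congr ?_ fun a ha ↦ (cfc_rpowIntegrand₁₂_eq ht ha).symm
  have affine : ConvexOn ℝ (Ici (0 : A))
      (fun a ↦ t ^ (p - 2) • a - algebraMap ℝ A (t ^ (p - 1))) :=
    ((convexOn_id (convex_Ici 0)).smul (by positivity)).sub (concaveOn_const _ (convex_Ici 0))
  exact affine.add <|
    (CStarAlgebra.convexOn_ringInverse_algebraMap_add ht).smul (by positivity)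

theorem cfcₙ_rpowIntegrand₁₂_eq_cfc {p t : ℝ} (hp : 1 < p) (ht : 0 < t) {a : A} (ha : 0 ≤ a) :
    cfcₙ (Real.rpowIntegrand₁₂ p t) a = cfc (Real.rpowIntegrand₁₂ p t) a := by
  have continuousOn_uncurry := Real.continuousOn_rpowIntegrand₁₂_uncurry hp (quasispectrum ℝ a)
    fun z hz ↦ quasispectrum_nonneg_of_nonneg a ha z hz
  refine cfcₙ_eq_cfc ?_ (Real.rpowIntegrand₁₂_zero ht)
  exact continuousOn_uncurry.comp (f := fun z : ℝ ↦ (t, z)) (by fun_prop) fun z hz ↦ ⟨ht, hz⟩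

theorem convexOn_cfc_rpow_of_mem_Ioo {p : ℝ} (hp : p ∈ Ioo 1 2) :
    ConvexOn ℝ (Ici (0 : A)) (fun a : A ↦ a ^ p) := by
  lift p to NNReal using by linarith [hp.1]
  have hp' : p ∈ Ioo 1 2 := by exact_mod_cast hp
  simp_rw [← CFC.nnrpow_eq_rpow (zero_lt_one.trans hp'.1)]
  obtain ⟨μ, hμ⟩ := CFC.exists_measure_nnrpow_eq_integral_cfcₙ_rpowIntegrand₁₂ A hp'
  refine ConvexOn.congr ?_ fun a ha ↦ (hμ a ha).2.symm
  refine integral_convexOn_of_integrand_ae (convex_Ici _) ?_ fun a ha ↦ (hμ a ha).1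
  filter_upwards [ae_restrict_mem measurableSet_Ioi] with t ht
  exact (convexOn_cfc_rpowIntegrand₁₂ ht).congr
    fun a ha ↦ (cfcₙ_rpowIntegrand₁₂_eq_cfc hp.1 ht ha).symm

theorem convexOn_cfc_rpow {p : ℝ} (hp : p ∈ Icc 1 2) :
    ConvexOn ℝ (Ici (0 : A)) (fun a : A ↦ a ^ p) := by
  rcases hp.1.eq_or_lt with rfl | one_lt
  · exact (convexOn_id (convex_Ici _)).congr fun a ha ↦ (CFC.rpow_one a ha).symm
  rcases hp.2.eq_or_lt with rfl | lt_two
  · refine (convexOn_star_mul_self.subset (subset_univ _) (convex_Ici _)).congr fun a ha ↦ ?_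
    have ha : 0 ≤ a := ha
    simpa only [ha.star_eq, sq, Nat.cast_ofNat] using (CFC.rpow_natCast a 2 ha).symm
  · exact convexOn_cfc_rpow_of_mem_Ioo ⟨one_lt, lt_two⟩

end OperatorConvexity

theorem cfc_rpow_add_of_nonneg {A : Type*} [PartialOrder A] [Ring A] [StarRing A]
    [TopologicalSpace A] [StarOrderedRing A] [Algebra ℝ A]
    [ContinuousFunctionalCalculus ℝ A IsSelfAdjoint] [NonnegSpectrumClass ℝ A]
    (a : A) {x y : ℝ} (hx : 0 ≤ x) (hy : 0 ≤ y) : a ^ (x + y) = a ^ x * a ^ y := by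
  simp only [CFC.rpow_def, NNReal.rpow_add_of_nonneg _ hx hy]
  exact cfc_mul _ _ a (NNReal.continuous_rpow_const hx).continuousOn
    (NNReal.continuous_rpow_const hy).continuousOn

section OperatorInequality

variable {A : Type*} [CStarAlgebra A] [PartialOrder A] [StarOrderedRing A] {a b : A}

theorem sqrt_add_mul_midpoint_rpow_mul_sqrt_add (ha : 0 ≤ a) (hb : 0 ≤ b) {r : ℝ} (hr : 0 ≤ r) :
    CFC.sqrt (a + b) * midpoint ℝ a b ^ r * CFC.sqrt (a + b)
      = (2 : ℝ) • midpoint ℝ a b ^ (r + 1) := by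
  set c := midpoint ℝ a b with hc
  have add_eq : a + b = (2 : ℝ) • c := by rw [hc, midpoint_eq_smul_add, smul_invOf_smul]
  have c_nonneg : 0 ≤ c := by
    rw [hc, midpoint_eq_smul_add]
    exact smul_nonneg (by norm_num) (add_nonneg ha hb)
  have commute_add : Commute c (a + b) := by
    rw [add_eq]; exact (Commute.refl c).smul_right _
  have commute_sqrt : Commute (c ^ r) (CFC.sqrt (a + b)) :=
    ((commute_add.cfc_nnreal _).symm.cfcₙ_nnreal _).symm
  calc
    CFC.sqrt (a + b) * c ^ r * CFC.sqrt (a + b)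
        = c ^ r * (CFC.sqrt (a + b) * CFC.sqrt (a + b)) := by rw [← commute_sqrt.eq, mul_assoc]
    _ = (2 : ℝ) • (c ^ r * c) := by
      rw [CFC.sqrt_mul_sqrt_self _ (add_nonneg ha hb), add_eq, mul_smul_comm]
    _ = (2 : ℝ) • c ^ (r + 1) := by
      rw [cfc_rpow_add_of_nonneg c hr zero_le_one, CFC.rpow_one c]

theorem half_smul_sqrt_add_mul_rpow_add_rpow_mul_sqrt_add_le (ha : 0 ≤ a) (hb : 0 ≤ b) {r : ℝ}
    (hr : r ∈ Icc 0 1) :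
    (1 / 2 : ℝ) • (CFC.sqrt (a + b) * (a ^ r + b ^ r) * CFC.sqrt (a + b))
      ≤ a ^ (r + 1) + b ^ (r + 1) := by
  have hr' : r + 1 ∈ Icc (1 : ℝ) 2 := ⟨by linarith [hr.1], by linarith [hr.2]⟩
  calc
    _ = CFC.sqrt (a + b) * midpoint ℝ (a ^ r) (b ^ r) * CFC.sqrt (a + b) := by
      simp only [midpoint_eq_smul_add, invOf_eq_inv, one_div, mul_smul_comm, smul_mul_assoc]
    _ ≤ CFC.sqrt (a + b) * midpoint ℝ a b ^ r * CFC.sqrt (a + b) :=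
      conjugate_le_conjugate_of_nonneg
        (midpoint_le_map_midpoint_of_concaveOn (CFC.concaveOn_rpow hr) ha hb) (CFC.sqrt_nonneg _)
    _ = (2 : ℝ) • midpoint ℝ a b ^ (r + 1) :=
      sqrt_add_mul_midpoint_rpow_mul_sqrt_add ha hb hr.1
    _ ≤ (2 : ℝ) • midpoint ℝ (a ^ (r + 1)) (b ^ (r + 1)) :=
      smul_le_smul_of_nonneg_left
        (map_midpoint_le_midpoint_of_convexOn (convexOn_cfc_rpow hr') ha hb) zero_le_two
    _ = a ^ (r + 1) + b ^ (r + 1) := by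
      rw [midpoint_eq_smul_add, smul_invOf_smul]

end OperatorInequality

section Rayleigh

variable {𝕜 E : Type*} [RCLike 𝕜] [NormedAddCommGroup E] [InnerProductSpace 𝕜 E]
  [FiniteDimensional 𝕜 E] {n : ℕ} {T S : E →ₗ[𝕜] E}

theorem exists_ne_zero_forall_inner_eq_zero {ι : Type*} [Fintype ι] (v : ι → E)
    (hι : Fintype.card ι < Module.finrank 𝕜 E) : ∃ x : E, x ≠ 0 ∧ ∀ i, inner 𝕜 (v i) x = 0 := by
  let f : E →ₗ[𝕜] ι → 𝕜 := LinearMap.pi fun i ↦ innerₛₗ 𝕜 (v i)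
  have ker_ne_bot : LinearMap.ker f ≠ ⊥ := LinearMap.ker_ne_bot_of_finrank_lt (by simpa using hι)
  obtain ⟨x, hx, hx0⟩ := Submodule.exists_mem_ne_zero_of_ne_bot ker_ne_bot
  exact ⟨x, hx0, congrFun (LinearMap.mem_ker.1 hx)⟩

theorem re_inner_apply_self_eq_sum_eigenvalues (hT : T.IsSymmetric)
    (hn : Module.finrank 𝕜 E = n) (x : E) :
    re (inner 𝕜 x (T x))
      = ∑ i, hT.eigenvalues hn i * ‖inner 𝕜 (hT.eigenvectorBasis hn i) x‖ ^ 2 := by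
  rw [← (hT.eigenvectorBasis hn).sum_inner_mul_inner, map_sum]
  refine Finset.sum_congr rfl fun i _ ↦ ?_
  rw [← hT, hT.apply_eigenvectorBasis, inner_smul_left, conj_ofReal, mul_left_comm,
    re_ofReal_mul, inner_mul_symm_re_eq_norm, norm_mul, norm_inner_symm x, sq]

theorem eigenvalues_mul_norm_sq_le_re_inner (hT : T.IsSymmetric) (hn : Module.finrank 𝕜 E = n)
    {j : Fin n} {x : E} (hx : ∀ i, j < i → inner 𝕜 (hT.eigenvectorBasis hn i) x = 0) :
    hT.eigenvalues hn j * ‖x‖ ^ 2 ≤ re (inner 𝕜 x (T x)) := by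
  rw [re_inner_apply_self_eq_sum_eigenvalues hT hn,
    ← (hT.eigenvectorBasis hn).sum_sq_norm_inner_right x, Finset.mul_sum]
  refine Finset.sum_le_sum fun i _ ↦ ?_
  rcases lt_or_ge j i with hji | hij
  · simp [hx i hji]
  · exact mul_le_mul_of_nonneg_right (hT.eigenvalues_antitone hn hij) (sq_nonneg _)

theorem re_inner_le_eigenvalues_mul_norm_sq (hT : T.IsSymmetric) (hn : Module.finrank 𝕜 E = n)
    {j : Fin n} {x : E} (hx : ∀ i, i < j → inner 𝕜 (hT.eigenvectorBasis hn i) x = 0) :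
    re (inner 𝕜 x (T x)) ≤ hT.eigenvalues hn j * ‖x‖ ^ 2 := by
  rw [re_inner_apply_self_eq_sum_eigenvalues hT hn,
    ← (hT.eigenvectorBasis hn).sum_sq_norm_inner_right x, Finset.mul_sum]
  refine Finset.sum_le_sum fun i _ ↦ ?_
  rcases lt_or_ge i j with hij | hji
  · simp [hx i hij]
  · exact mul_le_mul_of_nonneg_right (hT.eigenvalues_antitone hn hji) (sq_nonneg _)

theorem exists_ne_zero_eigenvalues_mul_le_and_le_eigenvalues_mul (hT : T.IsSymmetric)
    (hS : S.IsSymmetric) (hn : Module.finrank 𝕜 E = n) (j : Fin n) :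
    ∃ x : E, x ≠ 0 ∧ hT.eigenvalues hn j * ‖x‖ ^ 2 ≤ re (inner 𝕜 x (T x)) ∧
      re (inner 𝕜 x (S x)) ≤ hS.eigenvalues hn j * ‖x‖ ^ 2 := by
  -- Orthogonality to the `T`-eigenvectors after `j` and to the `S`-eigenvectors before `j` imposes
  -- only `n - 1` conditions on `x`.
  let v (i : {i : Fin n // i ≠ j}) : E :=
    if j < i.1 then hT.eigenvectorBasis hn i else hS.eigenvectorBasis hn i
  have card_lt : Fintype.card {i : Fin n // i ≠ j} < Module.finrank 𝕜 E := by
    rw [hn]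
    simpa using Fintype.card_subtype_lt (p := (· ≠ j)) (x := j) (by simp)
  obtain ⟨x, hx0, hx⟩ := exists_ne_zero_forall_inner_eq_zero (𝕜 := 𝕜) v card_lt
  refine ⟨x, hx0, eigenvalues_mul_norm_sq_le_re_inner hT hn fun i hi ↦ ?_,
    re_inner_le_eigenvalues_mul_norm_sq hS hn fun i hi ↦ ?_⟩
  · simpa only [v, hi, if_true] using hx ⟨i, hi.ne'⟩
  · simpa only [v, hi.not_gt, if_false] using hx ⟨i, hi.ne⟩

theorem mul_eigenvalues_le_eigenvalues_of_smul_le (hT : T.IsSymmetric) (hS : S.IsSymmetric)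
    (hn : Module.finrank 𝕜 E = n) {c : ℝ} (hc : 0 ≤ c) (h : (c : 𝕜) • T ≤ S) (j : Fin n) :
    c * hT.eigenvalues hn j ≤ hS.eigenvalues hn j := by
  obtain ⟨x, hx0, hTx, hSx⟩ :=
    exists_ne_zero_eigenvalues_mul_le_and_le_eigenvalues_mul hT hS hn j
  have form_le : c * re (inner 𝕜 x (T x)) ≤ re (inner 𝕜 x (S x)) := by
    simpa [inner_sub_right, inner_smul_right] using
      ((LinearMap.le_def _ _).1 h).re_inner_nonneg_right x
  refine le_of_mul_le_mul_right ?_ (by positivity : 0 < ‖x‖ ^ 2)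
  calc
    c * hT.eigenvalues hn j * ‖x‖ ^ 2 ≤ c * re (inner 𝕜 x (T x)) := by
      rw [mul_assoc]; exact mul_le_mul_of_nonneg_left hTx hc
    _ ≤ re (inner 𝕜 x (S x)) := form_le
    _ ≤ hS.eigenvalues hn j * ‖x‖ ^ 2 := hSx

end Rayleigh

section Matrix

open scoped MatrixOrder

variable {m : Type*} [Fintype m] [DecidableEq m]

theorem mul_eigenvalues₀_le_eigenvalues₀_of_smul_le {𝕜 : Type*} [RCLike 𝕜] {M N : Matrix m m 𝕜}
    (hM : M.IsHermitian) (hN : N.IsHermitian) {c : ℝ} (hc : 0 ≤ c) (h : c • M ≤ N)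
    (j : Fin (Fintype.card m)) : c * hM.eigenvalues₀ j ≤ hN.eigenvalues₀ j := by
  refine mul_eigenvalues_le_eigenvalues_of_smul_le _ _ _ hc ?_ j
  rw [LinearMap.le_def, ← map_smul, ← map_sub, Matrix.isPositive_toEuclideanLin_iff]
  rwa [RCLike.real_smul_eq_coe_smul (K := 𝕜), Matrix.le_iff] at h

theorem eigDesc_eq_eigenvalues₀ {M : Matrix m m ℂ} (hM : M.IsHermitian)
    (j : Fin (Fintype.card m)) : eigDesc M j = hM.eigenvalues₀ j := by
  have sort_eq : (M.charpoly.roots.map Complex.re).sort (· ≥ ·) = List.ofFn hM.eigenvalues₀ :=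
    hM.sort_roots_charpoly_eq_eigenvalues₀
  rw [eigDesc, sort_eq, List.getD_eq_getElem _ _ (by simp), List.getElem_ofFn]

theorem mul_eigDesc_le_eigDesc_of_smul_le {M N : Matrix m m ℂ} (hM : M.IsHermitian)
    (hN : N.IsHermitian) {c : ℝ} (hc : 0 ≤ c) (h : c • M ≤ N) {j : ℕ}
    (hj : j < Fintype.card m) : c * eigDesc M j ≤ eigDesc N j := by
  simpa only [← eigDesc_eq_eigenvalues₀] using
    mul_eigenvalues₀_le_eigenvalues₀_of_smul_le hM hN hc h ⟨j, hj⟩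

theorem eigDesc_mul_comm (M N : Matrix m m ℂ) (j : ℕ) : eigDesc (M * N) j = eigDesc (N * M) j := by
  rw [eigDesc, eigDesc, Matrix.charpoly_mul_comm]

theorem eigDesc_mul_eq_eigDesc_sqrt_mul_mul_sqrt {P : Matrix m m ℂ} (hP : 0 ≤ P)
    (X : Matrix m m ℂ) (j : ℕ) :
    eigDesc (P * X) j = eigDesc (CFC.sqrt P * X * CFC.sqrt P) j := by
  rw [eigDesc_mul_comm _ (CFC.sqrt P), ← mul_assoc, CFC.sqrt_mul_sqrt_self P]

theorem isHermitian_rpow_eq_rpow {M : Matrix m m ℂ} (hM : M.PosSemidef) (s : ℝ) :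
    hM.1.rpow s = M ^ s := by
  rw [CFC.rpow_eq_cfc_real hM.nonneg, hM.1.cfc_eq, Matrix.IsHermitian.rpow]

end Matrix

open scoped MatrixOrder Matrix.Norms.L2Operator in
theorem eig_rpow_sum_ge_half_eig_prod_general {m : Type*} [Fintype m] [DecidableEq m]
    {A B : Matrix m m ℂ} (hA : A.PosSemidef) (hB : B.PosSemidef) {r : ℝ} (hr : r ∈ Icc 0 1)
    {j : ℕ} (hj : j < Fintype.card m) :
    (1 / 2) * eigDesc ((A + B) * (hA.1.rpow r + hB.1.rpow r)) j
      ≤ eigDesc (hA.1.rpow (r + 1) + hB.1.rpow (r + 1)) j := by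
  rw [isHermitian_rpow_eq_rpow hA, isHermitian_rpow_eq_rpow hB, isHermitian_rpow_eq_rpow hA,
    isHermitian_rpow_eq_rpow hB]
  have isSelfAdjoint_add (s : ℝ) : IsSelfAdjoint (A ^ s + B ^ s) :=
    CFC.rpow_nonneg.isSelfAdjoint.add CFC.rpow_nonneg.isSelfAdjoint
  rw [eigDesc_mul_eq_eigDesc_sqrt_mul_mul_sqrt (hA.add hB).nonneg]
  exact mul_eigDesc_le_eigDesc_of_smul_le
    ((isSelfAdjoint_add r).conjugate_self (CFC.sqrt_nonneg _).isSelfAdjoint)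
    (isSelfAdjoint_add (r + 1)) (by norm_num)
    (half_smul_sqrt_add_mul_rpow_add_rpow_mul_sqrt_add_le hA.nonneg hB.nonneg hr) hj

theorem eig_rpow_sum_ge_half_eig_prod {n : ℕ} {A B : Matrix (Fin n) (Fin n) ℂ}
    (hA : A.PosSemidef) (hB : B.PosSemidef) (r : ℝ) (hr0 : 0 ≤ r) (hr1 : r ≤ 1)
    (j : ℕ) (hj : j < n) :
    (1 / 2) * eigDesc ((A + B) * (hA.1.rpow r + hB.1.rpow r)) j
      ≤ eigDesc (hA.1.rpow (r + 1) + hB.1.rpow (r + 1)) j :=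
  eig_rpow_sum_ge_half_eig_prod_general hA hB ⟨hr0, hr1⟩ (by simpa using hj)
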